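/- arXiv:math/0407064 — 2 statements merged into one kernel-verified Lean document; each statement's English description precedes it below -/
import Mathlib

section
/- Let f ∈ ℂ[x₁,…,x_{n+1}] be a strongly tame polynomial with last quasi-homogeneous part g, and let the monomials x^β, β ∈ I, form a ℂ-basis of the Milnor algebra V_g. Then the images of the same monomials x^β, β ∈ I, form a ℂ-basis of the Milnor algebra V_f := ℂ[x]/⟨∂f/∂x₁,…,∂f/∂x_{n+1}⟩; in particular dim_ℂ V_f = dim_ℂ V_g = μ := #I, i.e., f and g have the same Milnor number. -/
open MvPolynomial

/-!
Let `F` and `G` be the families of partial derivatives of `f` and `g`; each `G i` is the leading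
form of `F i`. Some power of every variable lies in `⟨G⟩`, since `⟨G⟩` is homogeneous and has
finite corank. These powers form a regular sequence whose length is the number of elements of
`G`, so by acyclicity of the Koszul complex all syzygies of `G` are Koszul relations. Koszul
relations lift to `F`, which allows one to cancel excess leading terms in a representation
`∑ hᵢ Fᵢ`: the leading forms of the elements of `⟨F⟩` are exactly the homogeneous elements of
`⟨G⟩`. Hence every graded complement of `⟨G⟩`, such as the span of a set of monomials, is a
complement of `⟨F⟩`.
-/

/-! ### Acyclicity of the Koszul complex -/

section Koszul

open ExteriorAlgebra Module

variable {R M : Type*} [CommRing R] [AddCommGroup M] [Module R M]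

/-- The differential of the Koszul complex `⋀ M` of a linear form `φ`, encoded as the contraction
of the exterior algebra, i.e. of the Clifford algebra of the zero form, by `φ`. Its exactness in
degree one controls the linear relations between the values of `φ`. -/
noncomputable def koszulDifferential (φ : Dual R M) :
    ExteriorAlgebra R M →ₗ[R] ExteriorAlgebra R M :=
  CliffordAlgebra.contractLeft (Q := 0) φ

lemma koszulDifferential_ι_mul (φ : Dual R M) (a : M) (x : ExteriorAlgebra R M) :
    koszulDifferential φ (ι R a * x) = φ a • x - ι R a * koszulDifferential φ x :=
  CliffordAlgebra.contractLeft_ι_mul _ _ _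

lemma koszulDifferential_ι (φ : Dual R M) (a : M) :
    koszulDifferential φ (ι R a) = algebraMap R _ (φ a) :=
  CliffordAlgebra.contractLeft_ι _ _ _

lemma koszulDifferential_koszulDifferential (φ : Dual R M) (x : ExteriorAlgebra R M) :
    koszulDifferential φ (koszulDifferential φ x) = 0 :=
  CliffordAlgebra.contractLeft_contractLeft _ _

lemma map_mulLeft_ι_exteriorPower_le (a : M) (k : ℕ) :
    (⋀[R]^k M).map (LinearMap.mulLeft R (ι R a)) ≤ ⋀[R]^(k + 1) M := by
  rintro _ ⟨x, hx, rfl⟩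
  rw [exteriorPower, pow_succ']
  exact Submodule.mul_mem_mul (LinearMap.mem_range_self _ a) hx

lemma map_koszulDifferential_exteriorPower_le (φ : Dual R M) (k : ℕ) :
    (⋀[R]^(k + 1) M).map (koszulDifferential φ) ≤ ⋀[R]^k M := by
  induction k with
  | zero =>
    rintro _ ⟨_, hx, rfl⟩
    obtain ⟨a, rfl⟩ : _ ∈ LinearMap.range (ι R (M := M)) := by simpa [exteriorPower] using hx
    rw [koszulDifferential_ι, exteriorPower, pow_zero]
    exact Submodule.algebraMap_mem _
  | succ k ih =>
    rw [exteriorPower, pow_succ', Submodule.map_le_iff_le_comap, Submodule.mul_le]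
    rintro _ ⟨a, rfl⟩ x hx
    rw [Submodule.mem_comap, koszulDifferential_ι_mul]
    exact sub_mem (Submodule.smul_mem _ _ hx)
      (map_mulLeft_ι_exteriorPower_le a k
        (Submodule.mem_map_of_mem (ih (Submodule.mem_map_of_mem hx))))

lemma exteriorPower_eq_bot_of_finrank_lt [Free R M] [Module.Finite R M] {k : ℕ}
    (hk : finrank R M < k) : ⋀[R]^k M = ⊥ := by
  rcases subsingleton_or_nontrivial R with hR | hR
  · have := Module.subsingleton R (ExteriorAlgebra R M)
    exact Subsingleton.elim _ _
  · rw [← Submodule.subsingleton_iff_eq_bot, ← finrank_eq_zero_iff_of_free (R := R),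
      exteriorPower.finrank_eq, Nat.choose_eq_zero_of_lt hk]

lemma apply_mem_smul {N : Type*} [AddCommGroup N] [Module R N] {f : M →ₗ[R] N}
    {P : Submodule R M} {Q : Submodule R N} (hf : P.map f ≤ Q) {J : Ideal R} {x : M}
    (hx : x ∈ J • P) : f x ∈ J • Q :=
  smul_mono_right J hf (Submodule.map_smul'' J P f ▸ Submodule.mem_map_of_mem hx)

lemma mem_smul_of_smul_mem {P : Submodule R M} [Flat R P] {J : Ideal R} {r : R}
    (hr : IsSMulRegular (R ⧸ J) r) {x : M} (hx : x ∈ P) (hrx : r • x ∈ J • P) : x ∈ J • P := by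
  have hreg : IsSMulRegular (P ⧸ J • (⊤ : Submodule R P)) r :=
    ((TensorProduct.tensorQuotEquivQuotSMul P J).isSMulRegular_congr r).1 (hr.lTensor P)
  rw [isSMulRegular_quotient_iff_mem_of_smul_mem] at hreg
  rw [← Submodule.mem_smul_top_iff J P ⟨x, hx⟩]
  exact hreg _ ((Submodule.mem_smul_top_iff J P _).2 hrx)

lemma sub_koszulDifferential_mem_smul [Free R M] {φ : Dual R M} {J : Ideal R} {e : M}
    (he : IsSMulRegular (R ⧸ J) (φ e)) {k : ℕ} {ω η y ζ : ExteriorAlgebra R M}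
    (hω : ω ∈ ⋀[R]^(k + 1) M) (hdω : koszulDifferential φ ω ∈ J • ⋀[R]^k M)
    (hη : η ∈ ⋀[R]^(k + 2) M) (hy : y ∈ J • ⋀[R]^(k + 2) M)
    (h : y + φ e • η = ι R e * ω - koszulDifferential φ ζ) :
    ω - koszulDifferential φ η ∈ J • ⋀[R]^(k + 1) M := by
  have hsub : ω - koszulDifferential φ η ∈ ⋀[R]^(k + 1) M :=
    sub_mem hω (map_koszulDifferential_exteriorPower_le φ _ (Submodule.mem_map_of_mem hη))
  have hsmul : φ e • (ω - koszulDifferential φ η) =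
      koszulDifferential φ y + ι R e * koszulDifferential φ ω := by
    have hd := congrArg (koszulDifferential φ) h
    rw [map_add, map_smul, map_sub, koszulDifferential_koszulDifferential,
      koszulDifferential_ι_mul, sub_zero, eq_sub_iff_add_eq] at hd
    rw [smul_sub, ← hd]
    abel
  refine mem_smul_of_smul_mem he hsub ?_
  rw [hsmul]
  exact add_mem (apply_mem_smul (map_koszulDifferential_exteriorPower_le φ _) hy)
    (apply_mem_smul (map_mulLeft_ι_exteriorPower_le e k) hdω)

-- If `φ e = z` and `ω` is a cycle modulo `(rs₁)`, then `e ∧ ω` is a cycle modulo `(rs₁, z)` of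
-- degree one higher, and a primitive of it modulo `(rs₁, z)` yields one of `ω` modulo `(rs₁)`,
-- because `z` is regular modulo `(rs₁)`. In degrees above the rank there are no nonzero cycles.
open RingTheory.Sequence in
lemma exists_sub_koszulDifferential_mem_ofList_smul [Free R M] [Module.Finite R M]
    {φ : Dual R M} {rs₁ rs₂ : List R} (hreg : IsWeaklyRegular R (rs₁ ++ rs₂))
    (hφ : ∀ r ∈ rs₂, r ∈ LinearMap.range φ) (hlen : finrank R M ≤ (rs₁ ++ rs₂).length)
    {ω : ExteriorAlgebra R M} (hω : ω ∈ ⋀[R]^(rs₁.length + 1) M)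
    (hdω : koszulDifferential φ ω ∈ Ideal.ofList rs₁ • ⋀[R]^rs₁.length M) :
    ∃ η ∈ ⋀[R]^(rs₁.length + 2) M,
      ω - koszulDifferential φ η ∈ Ideal.ofList rs₁ • ⋀[R]^(rs₁.length + 1) M := by
  induction rs₂ generalizing rs₁ ω with
  | nil =>
    rw [exteriorPower_eq_bot_of_finrank_lt (by simpa [Nat.lt_succ_iff] using hlen),
      Submodule.mem_bot] at hω
    exact ⟨0, zero_mem _, by simp [hω]⟩
  | cons z rs₂ ih =>
    obtain ⟨e, rfl⟩ := hφ z List.mem_cons_self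
    have he : IsSMulRegular (R ⧸ Ideal.ofList rs₁) (φ e) := by
      have := ((isWeaklyRegular_append_iff R _ _).1 hreg).2
      rw [isWeaklyRegular_cons_iff, smul_eq_mul, Ideal.mul_top] at this
      exact this.1
    have hsup (P : Submodule R (ExteriorAlgebra R M)) :
        Ideal.ofList (rs₁ ++ [φ e]) • P = Ideal.ofList rs₁ • P ⊔ Ideal.span {φ e} • P := by
      rw [Ideal.ofList_append, Ideal.ofList_singleton, Submodule.sup_smul]
    have heω : ι R e * ω ∈ ⋀[R]^(rs₁.length + 2) M :=
      map_mulLeft_ι_exteriorPower_le e _ (Submodule.mem_map_of_mem hω)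
    have hcycle : koszulDifferential φ (ι R e * ω) ∈
        Ideal.ofList (rs₁ ++ [φ e]) • ⋀[R]^(rs₁.length + 1) M := by
      rw [koszulDifferential_ι_mul, hsup]
      exact sub_mem (Submodule.mem_sup_right
        (Submodule.smul_mem_smul (Ideal.mem_span_singleton_self _) hω))
        (Submodule.mem_sup_left (apply_mem_smul (map_mulLeft_ι_exteriorPower_le e _) hdω))
    obtain ⟨ζ, -, hζ⟩ := ih (rs₁ := rs₁ ++ [φ e]) (ω := ι R e * ω) (by simpa using hreg)
      (fun r hr ↦ hφ r (List.mem_cons_of_mem _ hr)) (by simpa using hlen)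
      (by simpa using heω) (by simpa using hcycle)
    rw [List.length_append, List.length_singleton, hsup, Submodule.mem_sup,
      Submodule.ideal_span_singleton_smul] at hζ
    obtain ⟨y, hy, _, ⟨η, hη, rfl⟩, h⟩ := hζ
    exact ⟨η, hη, sub_koszulDifferential_mem_smul he hω hdω hη hy h⟩

lemma map_koszulDifferential_exteriorPower_two_le (φ : Dual R M) :
    (⋀[R]^2 M).map (koszulDifferential φ) ≤
      (Submodule.span R (Set.range fun p : M × M ↦ φ p.1 • p.2 - φ p.2 • p.1)).map (ι R) := by
  rw [exteriorPower, pow_two, Submodule.map_le_iff_le_comap, Submodule.mul_le]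
  rintro _ ⟨a, rfl⟩ _ ⟨b, rfl⟩
  refine ⟨_, Submodule.subset_span ⟨(a, b), rfl⟩, ?_⟩
  rw [koszulDifferential_ι_mul, koszulDifferential_ι, ← Algebra.commutes, ← Algebra.smul_def,
    map_sub, map_smul, map_smul]

theorem ker_le_span_of_isWeaklyRegular [Free R M] [Module.Finite R M] {φ : Dual R M}
    {rs : List R} (hreg : RingTheory.Sequence.IsWeaklyRegular R rs)
    (hφ : ∀ r ∈ rs, r ∈ LinearMap.range φ) (hlen : finrank R M ≤ rs.length) :
    LinearMap.ker φ ≤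
      Submodule.span R (Set.range fun p : M × M ↦ φ p.1 • p.2 - φ p.2 • p.1) := by
  intro h hh
  obtain ⟨η, hη, hsub⟩ := exists_sub_koszulDifferential_mem_ofList_smul (φ := φ) (rs₁ := [])
    (ω := ι R h) hreg hφ hlen (by simp [exteriorPower])
    (by simp [koszulDifferential_ι, LinearMap.mem_ker.1 hh])
  have hηh : ι R h = koszulDifferential φ η := by simpa [sub_eq_zero] using hsub
  obtain ⟨v, hv, hvh⟩ := map_koszulDifferential_exteriorPower_two_le φ ⟨η, hη, hηh.symm⟩
  rwa [← ι_leftInverse.injective hvh]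

end Koszul

/-! ### Koszul syzygies -/

section Syzygies

open Matrix

variable {ι A : Type*} [Fintype ι] [CommRing A]

/-- All linear relations `∑ i, h i * G i = 0` are combinations of the Koszul relations
`G j * G i - G i * G j = 0`. The skew coefficient matrix is encoded as `B - Bᵀ`, so that its
diagonal vanishes in characteristic two as well. Such relations lift to any family with leading
forms `G`. -/
def HasOnlyKoszulSyzygies (G : ι → A) : Prop :=
  ∀ h : ι → A, h ⬝ᵥ G = 0 → ∃ B : Matrix ι ι A, h = (B - Bᵀ) *ᵥ G

lemma sub_transpose_mulVec_dotProduct_self (B : Matrix ι ι A) (v : ι → A) :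
    ((B - Bᵀ) *ᵥ v) ⬝ᵥ v = 0 := by
  rw [sub_mulVec, sub_dotProduct, mulVec_transpose, ← dotProduct_mulVec, dotProduct_comm,
    sub_self]

lemma hasOnlyKoszulSyzygies_of_isWeaklyRegular {G : ι → A} {rs : List A}
    (hreg : RingTheory.Sequence.IsWeaklyRegular A rs)
    (hG : ∀ r ∈ rs, r ∈ Ideal.span (Set.range G)) (hlen : Fintype.card ι ≤ rs.length) :
    HasOnlyKoszulSyzygies G := by
  rcases subsingleton_or_nontrivial A with _ | _
  · exact fun h _ ↦ ⟨0, Subsingleton.elim _ _⟩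
  intro h hh
  let φ : Module.Dual A (ι → A) := Fintype.linearCombination A G
  have hφ (v : ι → A) : φ v = v ⬝ᵥ G := Fintype.linearCombination_apply A G v
  let skewMulVec : Matrix ι ι A →ₗ[A] ι → A :=
    { toFun B := (B - Bᵀ) *ᵥ G
      map_add' B C := by rw [transpose_add, add_sub_add_comm, add_mulVec]
      map_smul' r B := by rw [transpose_smul, ← smul_sub, smul_mulVec, RingHom.id_apply] }
  suffices h ∈ LinearMap.range skewMulVec from this.imp fun B hB ↦ hB.symm
  have hspan : Submodule.span A (Set.range fun p : (ι → A) × (ι → A) ↦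
      φ p.1 • p.2 - φ p.2 • p.1) ≤ LinearMap.range skewMulVec := by
    rw [Submodule.span_le]
    rintro _ ⟨⟨a, b⟩, rfl⟩
    refine ⟨vecMulVec b a, ?_⟩
    simp [skewMulVec, hφ, sub_mulVec, transpose_vecMulVec, vecMulVec_mulVec]
  refine hspan (ker_le_span_of_isWeaklyRegular hreg (fun r hr ↦ ?_) ?_ ((hφ h).trans hh))
  · rw [Fintype.range_linearCombination]
    exact hG r hr
  · rwa [Module.finrank_fintype_fun_eq_card]

end Syzygies

/-! ### Regularity of powers of the variables -/

section Monomials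

open RingTheory.Sequence

variable {R σ : Type*} [CommRing R]

lemma ofList_map_X_pow (l : List σ) (m : σ → ℕ) :
    Ideal.ofList (l.map fun j ↦ (X j : MvPolynomial σ R) ^ m j) =
      Ideal.span ((monomial · 1) '' ((fun j ↦ Finsupp.single j (m j)) '' {j | j ∈ l})) := by
  rw [Set.image_image]
  refine congrArg Ideal.span (Set.ext fun p ↦ ?_)
  simp only [List.mem_map, X_pow_eq_monomial, Set.mem_image, Set.mem_ofPred_eq]

lemma mem_ofList_map_X_pow_iff {l : List σ} {m : σ → ℕ} {p : MvPolynomial σ R} :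
    p ∈ Ideal.ofList (l.map fun j ↦ X j ^ m j) ↔ ∀ s ∈ p.support, ∃ j ∈ l, m j ≤ s j := by
  rw [ofList_map_X_pow, mem_ideal_span_monomial_image]
  simp

lemma X_pow_mul_mem_ofList_map_X_pow_iff {l : List σ} {m : σ → ℕ} {p : MvPolynomial σ R} {j : σ}
    (hj : j ∉ l) (k : ℕ) :
    X j ^ k * p ∈ Ideal.ofList (l.map fun j ↦ X j ^ m j) ↔
      p ∈ Ideal.ofList (l.map fun j ↦ X j ^ m j) := by
  refine ⟨fun h ↦ ?_, Ideal.mul_mem_left _ _⟩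
  rw [mem_ofList_map_X_pow_iff] at h ⊢
  intro s hs
  obtain ⟨i, hi, his⟩ := h (Finsupp.single j k + s) (by
    rwa [mem_support_iff, X_pow_eq_monomial, coeff_monomial_mul, one_mul, ← mem_support_iff])
  refine ⟨i, hi, ?_⟩
  rwa [Finsupp.add_apply, Finsupp.single_eq_of_ne (by grind), zero_add] at his

theorem isWeaklyRegular_map_X_pow {l : List σ} (hl : l.Nodup) (m : σ → ℕ) :
    IsWeaklyRegular (MvPolynomial σ R) (l.map fun j ↦ (X j : MvPolynomial σ R) ^ m j) := by
  induction l using List.reverseRecOn with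
  | nil => exact .nil _ _
  | append_singleton l j ih =>
    obtain ⟨hj, hl⟩ := List.nodup_cons.1 (List.nodup_append_comm.1 hl)
    rw [List.map_append, isWeaklyRegular_append_iff, List.map_singleton,
      isWeaklyRegular_singleton_iff, smul_eq_mul, Ideal.mul_top,
      isSMulRegular_quotient_iff_mem_of_smul_mem]
    exact ⟨ih hl, fun p ↦ (X_pow_mul_mem_ofList_map_X_pow_iff hj _).1⟩

theorem hasOnlyKoszulSyzygies_of_X_pow_mem [Fintype σ] {G : σ → MvPolynomial σ R}
    (hG : ∀ j, ∃ m : ℕ, X j ^ m ∈ Ideal.span (Set.range G)) : HasOnlyKoszulSyzygies G := by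
  choose m hm using hG
  refine hasOnlyKoszulSyzygies_of_isWeaklyRegular
    (isWeaklyRegular_map_X_pow Finset.univ.nodup_toList m) ?_ (by simp)
  simpa using hm

end Monomials

/-! ### The filtration by weighted degree and leading forms -/

section Filtration

variable {R σ : Type*} [CommRing R] {w : σ → ℤ} {m n : ℤ} {p q p' q' : MvPolynomial σ R}

variable (R) in
/-- The filtration of the polynomial ring by weighted degree: the polynomials all of whose
monomials have weight at most `m`. The weights are integers, so that `m` can be lowered freely. -/
noncomputable def weightedDegreeLE (w : σ → ℤ) (m : ℤ) : Submodule R (MvPolynomial σ R) :=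
  restrictSupport R {s | Finsupp.weight w s ≤ m}

lemma mem_weightedDegreeLE :
    p ∈ weightedDegreeLE R w m ↔ ∀ s, coeff s p ≠ 0 → Finsupp.weight w s ≤ m := by
  simp [weightedDegreeLE, mem_restrictSupport_iff, Set.subset_def]

lemma weightedDegreeLE_mono (w : σ → ℤ) : Monotone (weightedDegreeLE R w) :=
  fun _ _ hmn ↦ restrictSupport_mono R fun _ hs ↦ le_trans hs hmn

lemma mul_mem_weightedDegreeLE (hp : p ∈ weightedDegreeLE R w m)
    (hq : q ∈ weightedDegreeLE R w n) : p * q ∈ weightedDegreeLE R w (m + n) := by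
  have hpq := Submodule.mul_mem_mul hp hq
  rw [weightedDegreeLE, weightedDegreeLE, ← restrictSupport_add] at hpq
  refine restrictSupport_mono R ?_ hpq
  rintro _ ⟨s, hs, t, ht, rfl⟩
  simpa only [Set.mem_ofPred_eq, map_add] using add_le_add hs ht

lemma exists_mem_weightedDegreeLE (w : σ → ℤ) (p : MvPolynomial σ R) :
    ∃ m, p ∈ weightedDegreeLE R w m := by
  obtain ⟨m, hm⟩ := (p.support.image (Finsupp.weight w)).bddAbove
  exact ⟨m, fun s hs ↦ hm (Finset.mem_coe.2 (Finset.mem_image_of_mem _ hs))⟩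

lemma weightedDegreeLE_eq_bot (hw : 0 ≤ w) (hm : m < 0) : weightedDegreeLE R w m = ⊥ := by
  refine (Submodule.eq_bot_iff _).2 fun p hp ↦ ext _ _ fun s ↦ ?_
  have hs : 0 ≤ Finsupp.weight w s := by
    rw [Finsupp.weight_apply]
    exact Finset.sum_nonneg fun i _ ↦ nsmul_nonneg (hw i) _
  by_contra h
  exact absurd (mem_weightedDegreeLE.1 hp s h) (by lia)

lemma mem_weightedDegreeLE_of_isWeightedHomogeneous (hp : IsWeightedHomogeneous w p m) :
    p ∈ weightedDegreeLE R w m :=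
  mem_weightedDegreeLE.2 fun _ hs ↦ (hp hs).le

theorem weightedDegreeLE_induction (hw : 0 ≤ w) {P : MvPolynomial σ R → Prop} (zero : P 0)
    (step : ∀ m, (∀ q ∈ weightedDegreeLE R w (m - 1), P q) → ∀ p ∈ weightedDegreeLE R w m, P p)
    (p : MvPolynomial σ R) : P p := by
  have key (k : ℕ) : ∀ q ∈ weightedDegreeLE R w (k - 1), P q := by
    induction k with
    | zero =>
      rw [weightedDegreeLE_eq_bot hw (by simp)]
      rintro _ rfl
      exact zero
    | succ k ih => exact step _ (by simpa using ih)
  obtain ⟨m, hm⟩ := exists_mem_weightedDegreeLE w p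
  exact key (m + 1).toNat p (weightedDegreeLE_mono w (by lia) hm)

lemma weightedHomogeneousComponent_mul_of_right (hq : IsWeightedHomogeneous w q n)
    (p : MvPolynomial σ R) (m : ℤ) :
    weightedHomogeneousComponent w (m + n) (p * q) = weightedHomogeneousComponent w m p * q := by
  let := weightedGradedAlgebra R w
  have hdec (a : MvPolynomial σ R) (k : ℤ) :
      (DirectSum.decompose (weightedHomogeneousSubmodule R w) a k : MvPolynomial σ R) =
        weightedHomogeneousComponent w k a := decompose'_apply R w a k
  simpa only [hdec] using DirectSum.coe_decompose_mul_add_of_right_mem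
    (weightedHomogeneousSubmodule R w) (i := m) (a := p) hq

lemma weightedHomogeneousComponent_dotProduct {ι : Type*} [Fintype ι] {e : ι → ℤ}
    {G : ι → MvPolynomial σ R} (hG : ∀ i, IsWeightedHomogeneous w (G i) (e i)) (m : ℤ)
    (h : ι → MvPolynomial σ R) :
    weightedHomogeneousComponent w m (h ⬝ᵥ G) =
      (fun i ↦ weightedHomogeneousComponent w (m - e i) (h i)) ⬝ᵥ G := by
  simp only [dotProduct, map_sum, ← weightedHomogeneousComponent_mul_of_right (hG _),
    sub_add_cancel]

lemma weightedHomogeneousComponent_mem_span_of_isWeightedHomogeneous {ι : Type*} [Finite ι]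
    {G : ι → MvPolynomial σ R} {e : ι → ℤ}
    (hG : ∀ i, IsWeightedHomogeneous w (G i) (e i)) (hp : p ∈ Ideal.span (Set.range G)) (m : ℤ) :
    weightedHomogeneousComponent w m p ∈ Ideal.span (Set.range G) := by
  have := Fintype.ofFinite ι
  obtain ⟨h, rfl⟩ := Ideal.mem_span_range_iff_exists_fun.1 hp
  exact Ideal.mem_span_range_iff_exists_fun.2
    ⟨_, (weightedHomogeneousComponent_dotProduct hG m h).symm⟩

lemma weightedHomogeneousComponent_mem_restrictSupport {I : Set (σ →₀ ℕ)}
    (hp : p ∈ restrictSupport R I) (m : ℤ) :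
    weightedHomogeneousComponent w m p ∈ restrictSupport R I := by
  classical
  rw [mem_restrictSupport_iff] at hp ⊢
  refine subset_trans ?_ hp
  rw [support_weightedHomogeneousComponent]
  exact Finset.coe_subset.2 (Finset.filter_subset _ _)

/-- `q` is the leading form of `p` in degree `m`: it is homogeneous of weighted degree `m` and
`p - q` has smaller degree. The leading form is zero if `p` itself has degree less than `m`. -/
def IsLeadingForm (w : σ → ℤ) (m : ℤ) (p q : MvPolynomial σ R) : Prop :=
  IsWeightedHomogeneous w q m ∧ p - q ∈ weightedDegreeLE R w (m - 1)

namespace IsLeadingForm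

lemma mem_weightedDegreeLE (h : IsLeadingForm w m p q) : p ∈ weightedDegreeLE R w m := by
  rw [← sub_add_cancel p q]
  exact add_mem (weightedDegreeLE_mono w (by lia) h.2)
    (mem_weightedDegreeLE_of_isWeightedHomogeneous h.1)

lemma weightedHomogeneousComponent_eq (h : IsLeadingForm w m p q) :
    weightedHomogeneousComponent w m p = q := by
  rw [← sub_add_cancel p q, map_add, weightedHomogeneousComponent_eq_self h.1, add_eq_right]
  refine weightedHomogeneousComponent_eq_zero' _ _ fun s hs ↦ ?_
  have := _root_.mem_weightedDegreeLE.1 h.2 s (mem_support_iff.1 hs)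
  lia

lemma zero_iff : IsLeadingForm w m p 0 ↔ p ∈ weightedDegreeLE R w (m - 1) := by
  rw [IsLeadingForm, sub_zero, and_iff_right (isWeightedHomogeneous_zero R w m)]

lemma sub (h : IsLeadingForm w m p q) (h' : IsLeadingForm w m p' q') :
    IsLeadingForm w m (p - p') (q - q') :=
  ⟨h.1.sub h'.1, by simpa only [sub_sub_sub_comm] using sub_mem h.2 h'.2⟩

lemma mul (h : IsLeadingForm w m p q) (h' : IsLeadingForm w n p' q') :
    IsLeadingForm w (m + n) (p * p') (q * q') := by
  refine ⟨h.1.mul h'.1, ?_⟩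
  have heq : p * p' - q * q' = (p - q) * p' + q * (p' - q') := by ring
  rw [heq]
  refine add_mem ?_ ?_
  · simpa only [sub_add_eq_add_sub] using mul_mem_weightedDegreeLE h.2 h'.mem_weightedDegreeLE
  · simpa only [add_sub_assoc] using mul_mem_weightedDegreeLE
      (mem_weightedDegreeLE_of_isWeightedHomogeneous h.1) h'.2

lemma dotProduct {ι : Type*} [Fintype ι] {e : ι → ℤ} {h k F G : ι → MvPolynomial σ R}
    (hhk : ∀ i, IsLeadingForm w (m - e i) (h i) (k i))
    (hFG : ∀ i, IsLeadingForm w (e i) (F i) (G i)) :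
    IsLeadingForm w m (h ⬝ᵥ F) (k ⬝ᵥ G) := by
  have hi (i : ι) : IsLeadingForm w m (h i * F i) (k i * G i) := by
    simpa only [sub_add_cancel] using (hhk i).mul (hFG i)
  refine ⟨.sum _ _ _ fun i _ ↦ (hi i).1, ?_⟩
  rw [_root_.dotProduct, _root_.dotProduct, ← Finset.sum_sub_distrib]
  exact sum_mem fun i _ ↦ (hi i).2

end IsLeadingForm

lemma isLeadingForm_weightedHomogeneousComponent (hp : p ∈ weightedDegreeLE R w m) :
    IsLeadingForm w m p (weightedHomogeneousComponent w m p) := by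
  classical
  refine ⟨weightedHomogeneousComponent_isWeightedHomogeneous m p, mem_weightedDegreeLE.2
    fun s hs ↦ ?_⟩
  rw [coeff_sub, coeff_weightedHomogeneousComponent] at hs
  split_ifs at hs with hsm
  · simp at hs
  · have := mem_weightedDegreeLE.1 hp s (by simpa using hs)
    lia

lemma isLeadingForm_self (hp : IsWeightedHomogeneous w p m) : IsLeadingForm w m p p :=
  ⟨hp, by simp only [sub_self, zero_mem]⟩

lemma exists_mem_span_isLeadingForm {ι : Type*} [Finite ι] {F G : ι → MvPolynomial σ R}
    {e : ι → ℤ} (hFG : ∀ i, IsLeadingForm w (e i) (F i) (G i))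
    (hq : q ∈ Ideal.span (Set.range G)) (m : ℤ) :
    ∃ p ∈ Ideal.span (Set.range F), IsLeadingForm w m p (weightedHomogeneousComponent w m q) := by
  have := Fintype.ofFinite ι
  obtain ⟨h, rfl⟩ := Ideal.mem_span_range_iff_exists_fun.1 hq
  refine ⟨(fun i ↦ weightedHomogeneousComponent w (m - e i) (h i)) ⬝ᵥ F,
    Ideal.mem_span_range_iff_exists_fun.2 ⟨_, rfl⟩, ?_⟩
  change IsLeadingForm w m _ (weightedHomogeneousComponent w m (h ⬝ᵥ G))
  rw [weightedHomogeneousComponent_dotProduct fun i ↦ (hFG i).1]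
  exact .dotProduct
    (fun i ↦ isLeadingForm_self (weightedHomogeneousComponent_isWeightedHomogeneous _ _)) hFG

lemma isLeadingForm_pderiv (h : IsLeadingForm w m p q) (i : σ) :
    IsLeadingForm w (m - w i) (pderiv i p) (pderiv i q) := by
  have hcoeff {r : MvPolynomial σ R} {s : σ →₀ ℕ} (hs : coeff s (pderiv i r) ≠ 0) :
      coeff (s + Finsupp.single i 1) r ≠ 0 := by
    rw [coeff_pderiv] at hs
    exact left_ne_zero_of_mul hs
  have hweight (s : σ →₀ ℕ) :
      Finsupp.weight w (s + Finsupp.single i 1) = Finsupp.weight w s + w i := by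
    rw [map_add, Finsupp.weight_single, one_smul]
  constructor
  · intro s hs
    rw [eq_sub_iff_add_eq, ← hweight]
    exact h.1 (hcoeff hs)
  · rw [← map_sub, mem_weightedDegreeLE]
    intro s hs
    have := mem_weightedDegreeLE.1 h.2 _ (hcoeff hs)
    rw [hweight] at this
    lia

lemma isLeadingForm_weightedHomogeneousComponent_weightedTotalDegree (α : σ → ℕ)
    (f : MvPolynomial σ R) :
    IsLeadingForm (fun i ↦ (α i : ℤ)) (weightedTotalDegree α f : ℕ) f
      (weightedHomogeneousComponent α (weightedTotalDegree α f) f) := by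
  classical
  have hweight (s : σ →₀ ℕ) :
      Finsupp.weight (fun i ↦ (α i : ℤ)) s = (Finsupp.weight α s : ℕ) := by
    simp [Finsupp.weight_apply, Finsupp.sum]
  have hcomp : weightedHomogeneousComponent α (weightedTotalDegree α f) f =
      weightedHomogeneousComponent (fun i ↦ (α i : ℤ)) (weightedTotalDegree α f : ℕ) f := by
    ext s
    simp only [coeff_weightedHomogeneousComponent, hweight, Nat.cast_inj]
  rw [hcomp]
  refine isLeadingForm_weightedHomogeneousComponent (mem_weightedDegreeLE.2 fun s hs ↦ ?_)
  rw [hweight, Nat.cast_le]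
  exact le_weightedTotalDegree α (mem_support_iff.2 hs)

end Filtration

/-! ### Leading forms of an ideal -/

section LeadingForms

open Matrix

variable {R σ ι : Type*} [CommRing R] [Fintype ι] {w : σ → ℤ} {F G : ι → MvPolynomial σ R}
  {e : ι → ℤ}

-- The leading forms of the coefficients of a representation of too high degree form a syzygy of
-- `G`, which lifts to `F` and can be subtracted, because it is a Koszul relation.
lemma exists_dotProduct_eq_of_mem_weightedDegreeLE_sub_one (hG : HasOnlyKoszulSyzygies G)
    (hFG : ∀ i, IsLeadingForm w (e i) (F i) (G i)) {m : ℤ} {h : ι → MvPolynomial σ R}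
    (hh : ∀ i, h i ∈ weightedDegreeLE R w (m - e i))
    (hhF : h ⬝ᵥ F ∈ weightedDegreeLE R w (m - 1)) :
    ∃ h' : ι → MvPolynomial σ R,
      (∀ i, h' i ∈ weightedDegreeLE R w (m - 1 - e i)) ∧ h' ⬝ᵥ F = h ⬝ᵥ F := by
  let k (i : ι) := weightedHomogeneousComponent w (m - e i) (h i)
  have hk (i : ι) : IsLeadingForm w (m - e i) (h i) (k i) :=
    isLeadingForm_weightedHomogeneousComponent (hh i)
  have hkG : k ⬝ᵥ G = 0 := by
    rw [← (IsLeadingForm.dotProduct hk hFG).weightedHomogeneousComponent_eq,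
      (IsLeadingForm.zero_iff.2 hhF).weightedHomogeneousComponent_eq]
  obtain ⟨B, hB⟩ := hG k hkG
  let b : Matrix ι ι (MvPolynomial σ R) := of fun i j ↦
    weightedHomogeneousComponent w (m - e i - e j) (B i j)
  have hbk : (b - bᵀ) *ᵥ G = k := by
    funext i
    have hcomp := weightedHomogeneousComponent_dotProduct (fun j ↦ (hFG j).1) (m - e i)
      ((B - Bᵀ).row i)
    have hrow : (fun j ↦ weightedHomogeneousComponent w (m - e i - e j) ((B - Bᵀ).row i j)) =
        (b - bᵀ).row i := by
      funext j
      simp [b, sub_right_comm]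
    rw [hrow] at hcomp
    rw [← weightedHomogeneousComponent_eq_self (hk i).1, hB]
    exact hcomp.symm
  have hbF (i : ι) : IsLeadingForm w (m - e i) (((b - bᵀ) *ᵥ F) i) (k i) := by
    rw [← hbk]
    refine .dotProduct (fun j ↦ ?_) hFG
    have hb : IsWeightedHomogeneous w ((b - bᵀ) i j) (m - e i - e j) := by
      refine .sub (weightedHomogeneousComponent_isWeightedHomogeneous _ _) ?_
      rw [sub_right_comm]
      exact weightedHomogeneousComponent_isWeightedHomogeneous _ _
    exact isLeadingForm_self hb
  refine ⟨h - (b - bᵀ) *ᵥ F, fun i ↦ ?_, ?_⟩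
  · rw [sub_right_comm, ← IsLeadingForm.zero_iff, ← sub_self (k i)]
    exact (hk i).sub (hbF i)
  · rw [sub_dotProduct, sub_transpose_mulVec_dotProduct_self, sub_zero]

lemma exists_dotProduct_eq_of_mem_weightedDegreeLE (hG : HasOnlyKoszulSyzygies G)
    (hFG : ∀ i, IsLeadingForm w (e i) (F i) (G i)) {m : ℤ} {p : MvPolynomial σ R}
    (hpF : p ∈ Ideal.span (Set.range F)) (hp : p ∈ weightedDegreeLE R w m) :
    ∃ h : ι → MvPolynomial σ R, (∀ i, h i ∈ weightedDegreeLE R w (m - e i)) ∧ h ⬝ᵥ F = p := by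
  have lower (k : ℕ) (h : ι → MvPolynomial σ R)
      (hh : ∀ i, h i ∈ weightedDegreeLE R w (m + k - e i)) (hhF : h ⬝ᵥ F = p) :
      ∃ h : ι → MvPolynomial σ R,
        (∀ i, h i ∈ weightedDegreeLE R w (m - e i)) ∧ h ⬝ᵥ F = p := by
    induction k generalizing h with
    | zero => exact ⟨h, by simpa using hh, hhF⟩
    | succ k ih =>
      obtain ⟨h', hh', hh'F⟩ := exists_dotProduct_eq_of_mem_weightedDegreeLE_sub_one hG hFG hh
        (hhF ▸ weightedDegreeLE_mono w (by lia) hp)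
      exact ih h' (by simpa [add_sub_assoc] using hh') (hh'F.trans hhF)
  obtain ⟨h, hhF⟩ := Ideal.mem_span_range_iff_exists_fun.1 hpF
  choose n hn using fun i ↦ exists_mem_weightedDegreeLE w (h i)
  obtain ⟨N, hN⟩ := (Finset.univ.image fun i ↦ n i + e i).bddAbove
  refine lower (N - m).toNat h (fun i ↦ weightedDegreeLE_mono w ?_ (hn i)) hhF
  have : n i + e i ≤ N := hN (by simp)
  lia

lemma weightedHomogeneousComponent_mem_span_of_mem_weightedDegreeLE
    (hG : HasOnlyKoszulSyzygies G) (hFG : ∀ i, IsLeadingForm w (e i) (F i) (G i)) {m : ℤ}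
    {p : MvPolynomial σ R} (hpF : p ∈ Ideal.span (Set.range F))
    (hp : p ∈ weightedDegreeLE R w m) :
    weightedHomogeneousComponent w m p ∈ Ideal.span (Set.range G) := by
  obtain ⟨h, hh, rfl⟩ := exists_dotProduct_eq_of_mem_weightedDegreeLE hG hFG hpF hp
  rw [(IsLeadingForm.dotProduct (fun i ↦ isLeadingForm_weightedHomogeneousComponent (hh i))
    hFG).weightedHomogeneousComponent_eq]
  exact Ideal.mem_span_range_iff_exists_fun.2 ⟨_, rfl⟩

theorem isCompl_span_of_isLeadingForm (hw : 0 ≤ w) (hG : HasOnlyKoszulSyzygies G)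
    (hFG : ∀ i, IsLeadingForm w (e i) (F i) (G i)) {B : Submodule R (MvPolynomial σ R)}
    (hB : ∀ p ∈ B, ∀ m, weightedHomogeneousComponent w m p ∈ B)
    (hBG : IsCompl B ((Ideal.span (Set.range G)).restrictScalars R)) :
    IsCompl B ((Ideal.span (Set.range F)).restrictScalars R) := by
  constructor
  · rw [Submodule.disjoint_def]
    refine weightedDegreeLE_induction hw (fun _ _ ↦ rfl) fun m ih p hp hpB hpF ↦ ih p ?_ hpB hpF
    rw [← IsLeadingForm.zero_iff, ← Submodule.disjoint_def.1 hBG.disjoint _ (hB p hpB m)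
      (weightedHomogeneousComponent_mem_span_of_mem_weightedDegreeLE hG hFG hpF hp)]
    exact isLeadingForm_weightedHomogeneousComponent hp
  · rw [codisjoint_iff, Submodule.eq_top_iff']
    refine weightedDegreeLE_induction hw (zero_mem _) fun m ih p hp ↦ ?_
    obtain ⟨b, hb, q, hq, hbq⟩ := Submodule.mem_sup.1
      (hBG.sup_eq_top.ge (Submodule.mem_top (x := p)))
    obtain ⟨p', hp', hlead⟩ := exists_mem_span_isLeadingForm hFG hq m
    have hdiff : p - (weightedHomogeneousComponent w m b + p') ∈ weightedDegreeLE R w (m - 1) := by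
      have hb' : IsLeadingForm w m (weightedHomogeneousComponent w m b) _ :=
        isLeadingForm_self (weightedHomogeneousComponent_isWeightedHomogeneous m b)
      have hlead' := ((isLeadingForm_weightedHomogeneousComponent hp).sub hb').sub hlead
      rwa [← hbq, map_add, add_sub_cancel_left, sub_self, IsLeadingForm.zero_iff, hbq,
        sub_sub] at hlead'
    rw [← sub_add_cancel p (weightedHomogeneousComponent w m b + p')]
    exact add_mem (ih _ hdiff) (Submodule.add_mem_sup (hB b hb m) hp')

end LeadingForms

/-! ### Monomial bases of quotients -/

section Bases

lemma linearIndependent_comp_and_span_eq_top_iff {R M N ι : Type*} [Ring R] [AddCommGroup M]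
    [AddCommGroup N] [Module R M] [Module R N] {v : ι → M} (hv : LinearIndependent R v)
    {f : M →ₗ[R] N} (hf : Function.Surjective f) :
    LinearIndependent R (f ∘ v) ∧ Submodule.span R (Set.range (f ∘ v)) = ⊤ ↔
      IsCompl (Submodule.span R (Set.range v)) (LinearMap.ker f) := by
  rw [isCompl_iff, codisjoint_iff, Set.range_comp, ← Submodule.map_span,
    LinearMap.map_eq_top_iff (LinearMap.range_eq_top.2 hf)]
  exact and_congr_left fun _ ↦ ⟨Submodule.range_ker_disjoint, hv.map⟩

lemma linearIndependent_monomial_and_span_eq_top_iff {R σ : Type*} [CommRing R]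
    (I : Set (σ →₀ ℕ)) (K : Ideal (MvPolynomial σ R)) :
    (LinearIndependent R (fun β : I ↦ Ideal.Quotient.mk K (monomial (β : σ →₀ ℕ) (1 : R))) ∧
      Submodule.span R
        (Set.range fun β : I ↦ Ideal.Quotient.mk K (monomial (β : σ →₀ ℕ) (1 : R))) = ⊤) ↔
      IsCompl (restrictSupport R I) (K.restrictScalars R) := by
  have hv : LinearIndependent R fun β : I ↦ monomial (β : σ →₀ ℕ) (1 : R) := by
    have := (basisMonomials σ R).linearIndependent.comp _ (Subtype.val_injective (p := (· ∈ I)))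
    rwa [coe_basisMonomials] at this
  have hker : LinearMap.ker (Ideal.Quotient.mkₐ R K).toLinearMap = K.restrictScalars R := by
    ext p
    exact Ideal.Quotient.eq_zero_iff_mem
  rw [restrictSupport_eq_span, Set.image_eq_range, ← hker]
  exact linearIndependent_comp_and_span_eq_top_iff hv
    (f := (Ideal.Quotient.mkₐ R K).toLinearMap) Ideal.Quotient.mk_surjective

lemma finrank_eq_card_of_linearIndependent_of_span_eq_top {R M ι : Type*} [Ring R]
    [StrongRankCondition R] [AddCommGroup M] [Module R M] {s : Finset ι} {v : s → M}
    (hv : LinearIndependent R v) (hspan : Submodule.span R (Set.range v) = ⊤) :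
    Module.finrank R M = s.card := by
  rw [Module.finrank_eq_card_basis (Module.Basis.mk hv hspan.ge), Fintype.card_coe]

end Bases

/-! ### Milnor algebras -/

section Milnor

variable {R σ : Type*} [CommRing R]

-- For large `m` the monomial `X j ^ m` has larger weight than all monomials in `I`, so its
-- component of that weight is not affected by reducing it modulo `G` to a combination of those.
lemma exists_X_pow_mem_span {ι : Type*} [Finite ι] {w : σ → ℤ} {G : ι → MvPolynomial σ R}
    {e : ι → ℤ} (hG : ∀ i, IsWeightedHomogeneous w (G i) (e i)) {I : Finset (σ →₀ ℕ)}
    (hI : restrictSupport R (I : Set (σ →₀ ℕ)) ⊔ (Ideal.span (Set.range G)).restrictScalars R = ⊤)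
    {j : σ} (hj : 0 < w j) :
    ∃ m : ℕ, X j ^ m ∈ Ideal.span (Set.range G) := by
  obtain ⟨N, hN⟩ := (I.image (Finsupp.weight w)).bddAbove
  let m := (N + 1).toNat
  have hNm : N ≤ m • w j - 1 := by
    rw [nsmul_eq_mul]
    nlinarith [Int.self_le_toNat (N + 1)]
  have hX : IsWeightedHomogeneous w (X j ^ m : MvPolynomial σ R) (m • w j) :=
    (isWeightedHomogeneous_X R w j).pow m
  obtain ⟨q, hq, r, hr, hqr⟩ := Submodule.mem_sup.1
    (hI.ge (Submodule.mem_top (x := (X j ^ m : MvPolynomial σ R))))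
  have hq0 : weightedHomogeneousComponent w (m • w j) q = 0 := by
    refine (IsLeadingForm.zero_iff.2 (restrictSupport_mono R (fun s hs ↦ ?_)
      hq)).weightedHomogeneousComponent_eq
    exact (hN (Finset.mem_coe.2 (Finset.mem_image_of_mem _ hs))).trans hNm
  refine ⟨m, ?_⟩
  rw [← weightedHomogeneousComponent_eq_self hX, ← hqr, map_add, hq0, zero_add]
  exact weightedHomogeneousComponent_mem_span_of_isWeightedHomogeneous hG hr _

theorem isCompl_restrictSupport_span_of_isLeadingForm [Finite σ] {w : σ → ℤ} (hw : ∀ i, 0 < w i)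
    {F G : σ → MvPolynomial σ R} {e : σ → ℤ} (hFG : ∀ i, IsLeadingForm w (e i) (F i) (G i))
    {I : Finset (σ →₀ ℕ)}
    (hI : IsCompl (restrictSupport R (I : Set (σ →₀ ℕ)))
      ((Ideal.span (Set.range G)).restrictScalars R)) :
    IsCompl (restrictSupport R (I : Set (σ →₀ ℕ)))
      ((Ideal.span (Set.range F)).restrictScalars R) := by
  have := Fintype.ofFinite σ
  have hG : HasOnlyKoszulSyzygies G := hasOnlyKoszulSyzygies_of_X_pow_mem fun j ↦
    exists_X_pow_mem_span (fun i ↦ (hFG i).1) hI.sup_eq_top (hw j)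
  exact isCompl_span_of_isLeadingForm (fun i ↦ (hw i).le) hG hFG
    (fun _ ↦ weightedHomogeneousComponent_mem_restrictSupport) hI

theorem milnor_basis_of_f_eq_basis_of_g_general [Nontrivial R] [Finite σ] (α : σ → ℕ)
    (hα : ∀ i, 0 < α i) (f : MvPolynomial σ R) (d : ℕ) (hd : weightedTotalDegree α f = d)
    (g : MvPolynomial σ R) (hg : g = weightedHomogeneousComponent α d f) (I : Finset (σ →₀ ℕ))
    (hIindep : LinearIndependent R (fun β : I ↦
      Ideal.Quotient.mk (Ideal.span (Set.range fun i ↦ pderiv i g))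
        (monomial (β : σ →₀ ℕ) (1 : R))))
    (hIspan : Submodule.span R (Set.range fun β : I ↦
      Ideal.Quotient.mk (Ideal.span (Set.range fun i ↦ pderiv i g))
        (monomial (β : σ →₀ ℕ) (1 : R))) = ⊤) :
    LinearIndependent R (fun β : I ↦
      Ideal.Quotient.mk (Ideal.span (Set.range fun i ↦ pderiv i f))
        (monomial (β : σ →₀ ℕ) (1 : R))) ∧
    Submodule.span R (Set.range fun β : I ↦
      Ideal.Quotient.mk (Ideal.span (Set.range fun i ↦ pderiv i f))
        (monomial (β : σ →₀ ℕ) (1 : R))) = ⊤ ∧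
    Module.finrank R (MvPolynomial σ R ⧸ Ideal.span (Set.range fun i ↦ pderiv i f)) = I.card ∧
    Module.finrank R (MvPolynomial σ R ⧸ Ideal.span (Set.range fun i ↦ pderiv i g)) = I.card := by
  have hlead (i : σ) : IsLeadingForm (fun i ↦ (α i : ℤ)) (d - α i) (pderiv i f) (pderiv i g) := by
    subst hg hd
    exact isLeadingForm_pderiv
      (isLeadingForm_weightedHomogeneousComponent_weightedTotalDegree α f) i
  obtain ⟨hind, hspan⟩ := (linearIndependent_monomial_and_span_eq_top_iff (I : Set (σ →₀ ℕ)) _).2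
    (isCompl_restrictSupport_span_of_isLeadingForm (fun i ↦ Nat.cast_pos.2 (hα i)) hlead
      ((linearIndependent_monomial_and_span_eq_top_iff _ _).1 ⟨hIindep, hIspan⟩))
  exact ⟨hind, hspan, finrank_eq_card_of_linearIndependent_of_span_eq_top hind hspan,
    finrank_eq_card_of_linearIndependent_of_span_eq_top hIindep hIspan⟩

end Milnor

/-- Let `f` be strongly tame with last quasi-homogeneous part `g`, and let
the monomials `x^β`, `β ∈ I`, form a ℂ-basis of the Milnor algebra `V_g`.  Then the same
monomials form a ℂ-basis of the Milnor algebra `V_f`; in particular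
`dim_ℂ V_f = dim_ℂ V_g = μ = #I`, i.e. `f` and `g` have the same Milnor number. -/
theorem milnor_basis_of_f_eq_basis_of_g
    (n : ℕ) (hn : 1 ≤ n) (α : Fin (n + 1) → ℕ)
    (hαpos : ∀ i, 0 < α i) (hα : Finset.univ.gcd α = 1)
    (f : MvPolynomial (Fin (n + 1)) ℂ) (d : ℕ)
    (hd : MvPolynomial.weightedTotalDegree α f = d)
    (g : MvPolynomial (Fin (n + 1)) ℂ)
    (hg : g = weightedHomogeneousComponent α d f)
    (hg0 : g ≠ 0)
    (htame : ∀ x : Fin (n + 1) → ℂ, (∀ i, eval x (pderiv i g) = 0) → x = 0)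
    (I : Finset (Fin (n + 1) →₀ ℕ))
    (hIindep : LinearIndependent ℂ (fun β : I =>
      Ideal.Quotient.mk (Ideal.span (Set.range fun i => pderiv i g))
        (monomial (β : Fin (n + 1) →₀ ℕ) (1 : ℂ))))
    (hIspan : Submodule.span ℂ (Set.range fun β : I =>
      Ideal.Quotient.mk (Ideal.span (Set.range fun i => pderiv i g))
        (monomial (β : Fin (n + 1) →₀ ℕ) (1 : ℂ))) = ⊤) :
    LinearIndependent ℂ (fun β : I =>
      Ideal.Quotient.mk (Ideal.span (Set.range fun i => pderiv i f))
        (monomial (β : Fin (n + 1) →₀ ℕ) (1 : ℂ))) ∧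
    Submodule.span ℂ (Set.range fun β : I =>
      Ideal.Quotient.mk (Ideal.span (Set.range fun i => pderiv i f))
        (monomial (β : Fin (n + 1) →₀ ℕ) (1 : ℂ))) = ⊤ ∧
    Module.finrank ℂ
      (MvPolynomial (Fin (n + 1)) ℂ ⧸ Ideal.span (Set.range fun i => pderiv i f)) = I.card ∧
    Module.finrank ℂ
      (MvPolynomial (Fin (n + 1)) ℂ ⧸ Ideal.span (Set.range fun i => pderiv i g)) = I.card :=
  milnor_basis_of_f_eq_basis_of_g_general α hαpos f d hd g hg I hIindep hIspan
end

section
/- Let f ∈ ℂ[x₁,…,x_{n+1}] be a strongly tame polynomial of weighted degree d with homogenization F, let the monomials x^β, β ∈ I, be a ℂ-basis of V_g, and let b ∈ ℂ be a regular value of f (b ∉ f(Sing(f))). Then there exists a function β ∈ I ↦ d_β ∈ ℕ ∪ {0} such that the monomials x₀^{β₀}·x^β with β ∈ I and 0 ≤ β₀ ≤ d_β − 1 form a ℂ-basis of the vector space Ṽ := ℂ[x₀,x]/⟨∂F_b/∂x₀, ∂F_b/∂x₁, …, ∂F_b/∂x_{n+1}⟩, where F_b := F − b·x₀^d. -/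
open MvPolynomial

noncomputable section

/-- The homogenization `F = Σ_{i=0}^d fᵢ·x₀^{d-i}` of `f`. -/
def homogenization (n d : ℕ) (α : Fin (n + 1) → ℕ)
    (f : MvPolynomial (Fin (n + 1)) ℂ) : MvPolynomial (Fin (n + 2)) ℂ :=
  ∑ i ∈ Finset.range (d + 1),
    rename Fin.succ (weightedHomogeneousComponent α i f) * X 0 ^ (d - i)

/-- The ideal generated by all partial derivatives `∂F_b/∂x₀, …, ∂F_b/∂x_{n+1}` of
`F_b = F - b·x₀^d`. -/
def fullJacobianIdeal (n d : ℕ) (α : Fin (n + 1) → ℕ)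
    (f : MvPolynomial (Fin (n + 1)) ℂ) (b : ℂ) : Ideal (MvPolynomial (Fin (n + 2)) ℂ) :=
  Ideal.span (Set.range fun i : Fin (n + 2) =>
    pderiv i (homogenization n d α f - C b * X 0 ^ d))

/-!
Restricting `F_b` to `x₀ = 0` gives `g`, so `Ṽ / x₀Ṽ` is a quotient of `V_g` and is spanned by the
`x^β`. Moreover `x₀` acts nilpotently on `Ṽ`: at a common zero of the partials of `F_b` with
`x₀ ≠ 0`, the weighted scaling action would move it to `x₀ = 1`, where by Euler's identity it would
be a critical point of `f` with value `b`; so the Nullstellensatz puts a power of `x₀` in the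
Jacobian ideal. By nilpotency the products `x₀^k x^β` span `Ṽ`. Run through them in lexicographic
order, `β` first, keeping those that are not combinations of earlier ones. Multiplication by `x₀`
carries such a combination for `x₀^k x^β` to one for `x₀^(k+1) x^β`, so the exponents `k` kept for
a given `β` form an initial segment, of length `d_β`.
-/

section Greedy

variable {ι K V : Type*} [DivisionRing K] [AddCommGroup V] [Module K V]

variable (K) in
/-- The indices kept by the greedy algorithm that runs through the family `v` on `s` in the order
`r` and discards every vector lying in the span of the earlier ones. -/
def greedyIndices (r : ι → ι → Prop) (v : ι → V) (s : Set ι) : Set ι :=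
  {i ∈ s | v i ∉ Submodule.span K (v '' {j ∈ s | r j i})}

lemma linearIndepOn_greedyIndices (r : ι → ι → Prop) [IsStrictTotalOrder ι r]
    (v : ι → V) (s : Set ι) : LinearIndepOn K v (greedyIndices K r v s) := by
  classical
  let := linearOrderOfSTO r
  refine linearIndepOn_of_finite _ fun t hts ht ↦ ?_
  lift t to Finset ι using ht
  induction t using Finset.induction_on_max with
  | empty => simp
  | insert i t hlt ih =>
    rw [Finset.coe_insert, Set.insert_subset_iff] at hts
    rw [Finset.coe_insert]
    refine (ih hts.2).insert fun hi ↦ hts.1.2 (Submodule.span_mono ?_ hi)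
    exact Set.image_mono fun j hj ↦ ⟨(hts.2 hj).1, hlt j hj⟩

lemma span_image_greedyIndices (r : ι → ι → Prop) [IsWellFounded ι r]
    (v : ι → V) (s : Set ι) :
    Submodule.span K (v '' greedyIndices K r v s) = Submodule.span K (v '' s) := by
  refine le_antisymm (Submodule.span_mono (Set.image_mono (Set.sep_subset _ _))) ?_
  rw [Submodule.span_le, Set.image_subset_iff]
  intro i
  induction i using IsWellFounded.induction r with
  | ind i ih =>
    intro hi
    by_cases hmem : v i ∈ Submodule.span K (v '' {j ∈ s | r j i})
    · refine Submodule.span_le.2 ?_ hmem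
      rintro _ ⟨j, ⟨hj, hji⟩, rfl⟩
      exact ih j hji hj
    · exact Submodule.subset_span ⟨i, ⟨hi, hmem⟩, rfl⟩

end Greedy

section NilpotentEndomorphism

lemma eq_top_of_sup_range_eq_top {R M : Type*} [Semiring R] [AddCommMonoid M] [Module R M]
    {T : Module.End R M} (hT : IsNilpotent T) {U : Submodule R M} (hU : U.map T ≤ U)
    (htop : U ⊔ LinearMap.range T = ⊤) : U = ⊤ := by
  obtain ⟨N, hN⟩ := hT
  have hpow : ∀ k : ℕ, U ⊔ LinearMap.range (T ^ k) = ⊤ := by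
    intro k
    induction k with
    | zero => rw [pow_zero, Module.End.one_eq_id, LinearMap.range_id, sup_top_eq]
    | succ k ih =>
      rw [eq_top_iff, ← htop, LinearMap.range_eq_map T, ← ih, Submodule.map_sup,
        ← LinearMap.range_comp, ← Module.End.mul_eq_comp, ← pow_succ']
      exact sup_le le_sup_left (sup_le_sup_right hU _)
  simpa [hN] using hpow N

variable {ι K V : Type*} [DivisionRing K] [AddCommGroup V] [Module K V]

/-- The pairs `(i, k)` with `i ∈ s` for which the greedy algorithm keeps `T ^ k (e i)`, when the
pairs are run through lexicographically with `i` the major key. -/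
def greedyPowers (T : Module.End K V) (r : ι → ι → Prop) (e : ι → V) (s : Set ι) : Set (ι × ℕ) :=
  greedyIndices K (Prod.Lex r (· < ·)) (fun p ↦ (T ^ p.2) (e p.1)) {p | p.1 ∈ s}

variable {T : Module.End K V}

lemma mem_greedyPowers_of_succ {r : ι → ι → Prop} {e : ι → V} {s : Set ι} {i : ι} {k : ℕ}
    (h : (i, k + 1) ∈ greedyPowers T r e s) : (i, k) ∈ greedyPowers T r e s := by
  refine ⟨h.1, fun hk ↦ h.2 ?_⟩
  have hT := Submodule.mem_map_of_mem (f := T) hk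
  rw [Submodule.map_span, ← Module.End.mul_apply, ← pow_succ'] at hT
  refine Submodule.span_mono ?_ hT
  rintro _ ⟨_, ⟨⟨j, l⟩, ⟨hj, hlt⟩, rfl⟩, rfl⟩
  refine ⟨(j, l + 1), ⟨hj, ?_⟩, by simp only [pow_succ', Module.End.mul_apply]⟩
  simpa only [Prod.lex_def, add_lt_add_iff_right] using hlt

lemma exists_greedyPowers_eq (hT : IsNilpotent T) (r : ι → ι → Prop) (e : ι → V) (s : Set ι) :
    ∃ d : ι → ℕ, greedyPowers T r e s = {p | p.1 ∈ s ∧ p.2 < d p.1} := by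
  classical
  obtain ⟨N, hN⟩ := hT
  have hbound (i : ι) : ∃ k, (i, k) ∉ greedyPowers T r e s := ⟨N, fun h ↦ h.2 (by simp [hN])⟩
  have hanti (i : ι) : Antitone fun k ↦ (i, k) ∈ greedyPowers T r e s :=
    antitone_nat_of_succ_le fun _ ↦ mem_greedyPowers_of_succ
  refine ⟨fun i ↦ Nat.find (hbound i), Set.ext fun ⟨i, k⟩ ↦ ⟨fun h ↦ ⟨h.1, ?_⟩, fun h ↦ ?_⟩⟩
  · by_contra! hk
    exact Nat.find_spec (hbound i) (hanti i hk h)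
  · exact not_not.1 (Nat.find_min (hbound i) h.2)

theorem exists_linearIndependent_pow_apply_span_eq_top (hT : IsNilpotent T) (e : ι → V)
    (s : Set ι) (htop : Submodule.span K (e '' s) ⊔ LinearMap.range T = ⊤) :
    ∃ d : ι → ℕ,
      LinearIndependent K (fun p : {p : ι × ℕ // p.1 ∈ s ∧ p.2 < d p.1} ↦ (T ^ p.1.2) (e p.1.1)) ∧
      Submodule.span K (Set.range fun p : {p : ι × ℕ // p.1 ∈ s ∧ p.2 < d p.1} ↦
        (T ^ p.1.2) (e p.1.1)) = ⊤ := by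
  obtain ⟨d, hd⟩ := exists_greedyPowers_eq hT WellOrderingRel e s
  have hindep : LinearIndepOn K (fun p : ι × ℕ ↦ (T ^ p.2) (e p.1))
      (greedyPowers T WellOrderingRel e s) := linearIndepOn_greedyIndices _ _ _
  have hspan : Submodule.span K ((fun p : ι × ℕ ↦ (T ^ p.2) (e p.1)) ''
      greedyPowers T WellOrderingRel e s) = Submodule.span K _ := span_image_greedyIndices _ _ _
  rw [hd] at hindep hspan
  refine ⟨d, hindep, ?_⟩
  rw [Set.image_eq_range] at hspan
  refine hspan.trans (eq_top_of_sup_range_eq_top hT ?_ ?_)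
  · rw [Submodule.map_span, Submodule.span_le]
    rintro _ ⟨_, ⟨⟨i, k⟩, hi, rfl⟩, rfl⟩
    exact Submodule.subset_span ⟨(i, k + 1), hi, by simp only [pow_succ', Module.End.mul_apply]⟩
  · rw [eq_top_iff, ← htop]
    refine sup_le_sup_right (Submodule.span_mono ?_) _
    rintro _ ⟨i, hi, rfl⟩
    exact ⟨(i, 0), hi, by simp⟩

end NilpotentEndomorphism

section WeightedHomogeneous

variable {R σ : Type*} [CommSemiring R] {p : MvPolynomial σ R}

lemma isWeightedHomogeneous_rename {M τ : Type*} [AddCommMonoid M] {w : τ → M} {e : σ → τ} {m : M}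
    (hp : p.IsWeightedHomogeneous (w ∘ e) m) : (rename e p).IsWeightedHomogeneous w m := by
  induction hp using IsWeightedHomogeneous.induction_on with
  | zero => simpa using isWeightedHomogeneous_zero R w m
  | add p q _ _ hp hq => simpa using hp.add hq
  | monomial s r hs =>
    rw [rename_monomial]
    refine isWeightedHomogeneous_monomial w _ r ?_
    rw [← hs]
    exact Finsupp.linearCombination_mapDomain ℕ e s

lemma isWeightedHomogeneous_pderiv_tsub {w : σ → ℕ} {d : ℕ} (hp : p.IsWeightedHomogeneous w d)
    (i : σ) : (pderiv i p).IsWeightedHomogeneous w (d - w i) := by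
  intro m hm
  have hweight := hp (left_ne_zero_of_mul (coeff_pderiv p m ▸ hm))
  rw [map_add, Finsupp.weight_single, one_smul] at hweight
  omega

lemma eval_pow_weight_mul {w : σ → ℕ} {d : ℕ} (hp : p.IsWeightedHomogeneous w d) (t : R)
    (x : σ → R) : eval (fun i ↦ t ^ w i * x i) p = t ^ d * eval x p := by
  induction hp using IsWeightedHomogeneous.induction_on with
  | zero => simp
  | add p q _ _ hp hq => simp only [map_add, hp, hq, mul_add]
  | monomial s r hs =>
    simp only [eval_monomial, mul_pow, Finsupp.prod_mul, ← pow_mul]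
    rw [← hs, Finsupp.weight_apply, Finsupp.sum, ← Finset.prod_pow_eq_pow_sum, Finsupp.prod]
    simp only [smul_eq_mul, mul_comm (w _)]
    ring

lemma eval_eq_zero_of_forall_eval_pderiv_eq_zero {R : Type*} [CommRing R] [IsDomain R]
    [Finite σ] {w : σ → ℕ} {d : ℕ} (hd : (d : R) ≠ 0) {p : MvPolynomial σ R}
    (hp : p.IsWeightedHomogeneous w d) {x : σ → R} (hx : ∀ i, eval x (pderiv i p) = 0) :
    eval x p = 0 := by
  have := Fintype.ofFinite σ
  have heuler := congrArg (eval x) hp.sum_weight_X_mul_pderiv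
  simpa [hx, hd] using heuler

lemma sum_range_weightedHomogeneousComponent {w : σ → ℕ} {d : ℕ}
    (hd : weightedTotalDegree w p ≤ d) :
    ∑ i ∈ Finset.range (d + 1), weightedHomogeneousComponent w i p = p := by
  classical
  ext m
  simp only [coeff_sum, coeff_weightedHomogeneousComponent, Finset.sum_ite_eq, Finset.mem_range,
    Order.lt_add_one_iff, ite_eq_left_iff]
  intro hm
  by_contra hne
  exact hm ((le_weightedTotalDegree w (mem_support_iff.2 (Ne.symm hne))).trans hd)

lemma ne_zero_of_forall_eval_pderiv_weightedHomogeneousComponent [Nontrivial R] [Nonempty σ]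
    {w : σ → ℕ} (hw : ∀ i, w i ≠ 0) {d : ℕ}
    (htame : ∀ x : σ → R,
      (∀ i, eval x (pderiv i (weightedHomogeneousComponent w d p)) = 0) → x = 0) : d ≠ 0 := by
  rintro rfl
  refine one_ne_zero (htame 1 fun i ↦ ?_)
  rw [weightedHomogeneousComponent_zero p hw, pderiv_C, map_zero]

end WeightedHomogeneous

section SpecializeHead

variable {R : Type*} [CommRing R] {n : ℕ}

/-- The substitution `x₀ = c` in `R[x₀, x₁, …, xₙ]`, with the remaining variables renumbered.  It is
the dehomogenization for `c = 1` and the restriction to the hyperplane at infinity for `c = 0`. -/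
def specializeHead (c : R) : MvPolynomial (Fin (n + 1)) R →ₐ[R] MvPolynomial (Fin n) R :=
  aeval (Fin.cons (C c) X)

@[simp]
lemma specializeHead_X_zero (c : R) :
    specializeHead c (X 0 : MvPolynomial (Fin (n + 1)) R) = C c := by
  simp [specializeHead]

@[simp]
lemma specializeHead_X_succ (c : R) (i : Fin n) : specializeHead c (X i.succ) = X i := by
  simp [specializeHead]

@[simp]
lemma specializeHead_rename_succ (c : R) (p : MvPolynomial (Fin n) R) :
    specializeHead c (rename Fin.succ p) = p := by
  have hX : (Fin.cons (C c) X : Fin (n + 1) → MvPolynomial (Fin n) R) ∘ Fin.succ = X :=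
    Fin.cons_comp_succ _ _
  rw [specializeHead, aeval_rename, hX, aeval_X_left_apply]

lemma eval_specializeHead (c : R) (y : Fin n → R) (p : MvPolynomial (Fin (n + 1)) R) :
    eval y (specializeHead c p) = eval (Fin.cons c y) p := by
  induction p using MvPolynomial.induction_on with
  | C a => simp
  | add p q hp hq => simp only [map_add, hp, hq]
  | mul_X p j hp => cases j using Fin.cases <;> simp [hp]

lemma pderiv_specializeHead (c : R) (i : Fin n) (p : MvPolynomial (Fin (n + 1)) R) :
    pderiv i (specializeHead c p) = specializeHead c (pderiv i.succ p) := by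
  induction p using MvPolynomial.induction_on with
  | C a => simp
  | add p q hp hq => simp only [map_add, hp, hq]
  | mul_X p j hp =>
    cases j using Fin.cases with
    | zero => simp [pderiv_X_of_ne (Fin.succ_ne_zero i).symm, hp]
    | succ j => by_cases hji : j = i <;> simp [pderiv_X, hji, hp]

lemma X_zero_sub_C_dvd_sub_rename_specializeHead (c : R) (p : MvPolynomial (Fin (n + 1)) R) :
    X 0 - C c ∣ p - rename Fin.succ (specializeHead c p) := by
  rw [← Ideal.mem_span_singleton, ← Ideal.Quotient.eq]
  let π := Ideal.Quotient.mkₐ R (Ideal.span {(X 0 : MvPolynomial (Fin (n + 1)) R) - C c})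
  suffices hπ : π = (π.comp (rename Fin.succ)).comp (specializeHead c) from DFunLike.congr_fun hπ p
  ext j
  cases j using Fin.cases with
  | zero => simp [π, Ideal.Quotient.eq]
  | succ j => simp

end SpecializeHead

/-- The ideal generated by all partial derivatives of `p`, so that `V_g` is the quotient by
`jacobianIdeal g`. -/
def jacobianIdeal {R σ : Type*} [CommSemiring R] (p : MvPolynomial σ R) :
    Ideal (MvPolynomial σ R) :=
  Ideal.span (Set.range fun i ↦ pderiv i p)

section Jacobian

lemma jacobianIdeal_specializeHead_le_map {R : Type*} [CommRing R] {n : ℕ} (c : R)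
    (p : MvPolynomial (Fin (n + 1)) R) :
    jacobianIdeal (specializeHead c p) ≤ (jacobianIdeal p).map (specializeHead c) := by
  rw [jacobianIdeal, Ideal.span_le]
  rintro _ ⟨i, rfl⟩
  simp only [pderiv_specializeHead]
  exact Ideal.mem_map_of_mem _ (Ideal.subset_span ⟨i.succ, rfl⟩)

lemma span_image_sup_range_mulLeft_X_zero_eq_top {R ι : Type*} [CommRing R] {n : ℕ}
    {J : Ideal (MvPolynomial (Fin (n + 1)) R)} {J₀ : Ideal (MvPolynomial (Fin n) R)}
    (hJ : J₀ ≤ J.map (specializeHead 0)) {e : ι → MvPolynomial (Fin n) R} {s : Set ι}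
    (hspan : Submodule.span R (Set.range fun i : s ↦ Ideal.Quotient.mk J₀ (e i)) = ⊤) :
    Submodule.span R ((fun i ↦ Ideal.Quotient.mk J (rename Fin.succ (e i))) '' s) ⊔
      LinearMap.range (LinearMap.mulLeft R (Ideal.Quotient.mk J (X 0))) = ⊤ := by
  rw [eq_top_iff]
  rintro a -
  obtain ⟨p, rfl⟩ := Ideal.Quotient.mk_surjective a
  have hp : Ideal.Quotient.mk J₀ (specializeHead 0 p) ∈
      (Submodule.span R (e '' s)).map (Ideal.Quotient.mkₐ R J₀).toLinearMap := by
    rw [Submodule.map_span, Set.image_image, Set.image_eq_range]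
    exact hspan ▸ Submodule.mem_top
  obtain ⟨q, hq, hqp⟩ := hp
  obtain ⟨j, hj, hjp⟩ := (Ideal.mem_map_iff_of_surjective (specializeHead 0)
    fun q ↦ ⟨_, specializeHead_rename_succ 0 q⟩).1 (hJ (Ideal.Quotient.eq.1 hqp.symm))
  obtain ⟨u, hu⟩ := X_zero_sub_C_dvd_sub_rename_specializeHead 0 (p - j)
  refine Submodule.mem_sup.2 ⟨Ideal.Quotient.mk J (rename Fin.succ q), ?_,
    Ideal.Quotient.mk J (X 0) * Ideal.Quotient.mk J u, ⟨_, rfl⟩, ?_⟩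
  · have hmap := Submodule.mem_map_of_mem
      (f := ((Ideal.Quotient.mkₐ R J).comp (rename Fin.succ)).toLinearMap) hq
    rwa [Submodule.map_span, Set.image_image] at hmap
  · rw [← map_mul, ← map_add, eq_comm, Ideal.Quotient.eq]
    rw [map_sub, hjp, sub_sub_cancel, map_zero, sub_zero] at hu
    convert hj using 1
    linear_combination hu

lemma apply_zero_eq_zero_of_forall_eval_pderiv_eq_zero {K : Type*} [Field K] [IsAlgClosed K]
    {n d : ℕ} {w : Fin (n + 1) → ℕ} (hw : w 0 ≠ 0) (hd : (d : K) ≠ 0)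
    {G : MvPolynomial (Fin (n + 1)) K} (hG : G.IsWeightedHomogeneous w d)
    (hreg : ∀ y, (∀ i, eval y (pderiv i (specializeHead 1 G)) = 0) →
      eval y (specializeHead 1 G) ≠ 0)
    {x : Fin (n + 1) → K} (hx : ∀ i, eval x (pderiv i G) = 0) : x 0 = 0 := by
  by_contra hx0
  obtain ⟨t, ht⟩ := IsAlgClosed.exists_pow_nat_eq (x 0) (Nat.pos_of_ne_zero hw)
  have ht0 : t ≠ 0 := by
    rintro rfl
    exact hx0 (by rw [← ht, zero_pow hw])
  set y : Fin n → K := fun i ↦ x i.succ / t ^ w i.succ with hy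
  have hxy : x = fun j ↦ t ^ w j * (Fin.cons 1 y : Fin (n + 1) → K) j := by
    ext j
    cases j using Fin.cases with
    | zero => simp [ht]
    | succ j => simp [hy, mul_div_cancel₀, ht0]
  have hcrit : ∀ j, eval (Fin.cons 1 y) (pderiv j G) = 0 := by
    intro j
    have hj := hx j
    rw [hxy, eval_pow_weight_mul (isWeightedHomogeneous_pderiv_tsub hG j)] at hj
    exact (mul_eq_zero.1 hj).resolve_left (pow_ne_zero _ ht0)
  refine hreg y (fun i ↦ ?_) ?_
  · rw [pderiv_specializeHead, eval_specializeHead, hcrit]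
  · rw [eval_specializeHead, eval_eq_zero_of_forall_eval_pderiv_eq_zero hd hG hcrit]

lemma X_zero_mem_radical_jacobianIdeal {K : Type*} [Field K] [IsAlgClosed K] {n d : ℕ}
    {w : Fin (n + 1) → ℕ} (hw : w 0 ≠ 0) (hd : (d : K) ≠ 0)
    {G : MvPolynomial (Fin (n + 1)) K} (hG : G.IsWeightedHomogeneous w d)
    (hreg : ∀ y, (∀ i, eval y (pderiv i (specializeHead 1 G)) = 0) →
      eval y (specializeHead 1 G) ≠ 0) :
    X 0 ∈ (jacobianIdeal G).radical := by
  rw [← vanishingIdeal_zeroLocus_eq_radical (K := K), mem_vanishingIdeal_iff]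
  intro x hx
  rw [aeval_X]
  refine apply_zero_eq_zero_of_forall_eval_pderiv_eq_zero hw hd hG hreg fun i ↦ ?_
  simpa only [aeval_eq_eval] using hx _ (Ideal.subset_span ⟨i, rfl⟩)

-- With `G = F_b`, `specializeHead 1 G` is `f - b` and `specializeHead 0 G` is `g`, so `hreg` says
-- that `b` is a regular value of `f`.
theorem exists_dbeta_basis_general {K ι : Type*} [Field K] [IsAlgClosed K] {n d : ℕ}
    {w : Fin (n + 1) → ℕ} (hw : w 0 ≠ 0) (hd : (d : K) ≠ 0)
    {G : MvPolynomial (Fin (n + 1)) K} (hG : G.IsWeightedHomogeneous w d)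
    (hreg : ∀ y, (∀ i, eval y (pderiv i (specializeHead 1 G)) = 0) →
      eval y (specializeHead 1 G) ≠ 0)
    {e : ι → MvPolynomial (Fin n) K} {s : Set ι}
    (hspan : Submodule.span K (Set.range fun i : s ↦
      Ideal.Quotient.mk (jacobianIdeal (specializeHead 0 G)) (e i)) = ⊤) :
    ∃ dβ : ι → ℕ,
      LinearIndependent K (fun p : {p : ι × ℕ // p.1 ∈ s ∧ p.2 < dβ p.1} ↦
        Ideal.Quotient.mk (jacobianIdeal G) (X 0 ^ p.1.2 * rename Fin.succ (e p.1.1))) ∧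
      Submodule.span K (Set.range fun p : {p : ι × ℕ // p.1 ∈ s ∧ p.2 < dβ p.1} ↦
        Ideal.Quotient.mk (jacobianIdeal G) (X 0 ^ p.1.2 * rename Fin.succ (e p.1.1))) = ⊤ := by
  have hnil : IsNilpotent
      (LinearMap.mulLeft K (Ideal.Quotient.mk (jacobianIdeal G) (X 0))) := by
    obtain ⟨N, hN⟩ := X_zero_mem_radical_jacobianIdeal hw hd hG hreg
    refine ⟨N, ?_⟩
    rw [LinearMap.pow_mulLeft, ← map_pow, Ideal.Quotient.eq_zero_iff_mem.2 hN,
      LinearMap.mulLeft_zero_eq_zero]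
  simpa only [LinearMap.pow_mulLeft, LinearMap.mulLeft_apply, map_mul, map_pow] using
    exists_linearIndependent_pow_apply_span_eq_top hnil _ s
      (span_image_sup_range_mulLeft_X_zero_eq_top (jacobianIdeal_specializeHead_le_map 0 G) hspan)

end Jacobian

section Homogenization

variable (n d : ℕ) (α : Fin (n + 1) → ℕ) (f : MvPolynomial (Fin (n + 1)) ℂ) (b : ℂ)

lemma isWeightedHomogeneous_homogenization_sub :
    (homogenization n d α f - C b * X 0 ^ d).IsWeightedHomogeneous
      (Fin.cons 1 α : Fin (n + 2) → ℕ) d := by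
  have hX (k : ℕ) : ((X 0 : MvPolynomial (Fin (n + 2)) ℂ) ^ k).IsWeightedHomogeneous
      (Fin.cons 1 α : Fin (n + 2) → ℕ) k := by
    simpa using (isWeightedHomogeneous_X ℂ (Fin.cons 1 α : Fin (n + 2) → ℕ) 0).pow k
  refine (IsWeightedHomogeneous.sum _ _ _ fun i hi ↦ ?_).sub ((hX d).C_mul b)
  have hid : i + (d - i) = d := Nat.add_sub_of_le (Finset.mem_range_succ_iff.1 hi)
  rw [← hid, Nat.add_sub_cancel_left]
  refine (isWeightedHomogeneous_rename ?_).mul (hX (d - i))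
  rw [Fin.cons_comp_succ]
  exact weightedHomogeneousComponent_isWeightedHomogeneous i f

variable {n d α f}

lemma specializeHead_one_homogenization_sub (hd : weightedTotalDegree α f ≤ d) :
    specializeHead 1 (homogenization n d α f - C b * X 0 ^ d) = f - C b := by
  simp [homogenization, sum_range_weightedHomogeneousComponent hd]

lemma specializeHead_zero_homogenization_sub (hd : d ≠ 0) :
    specializeHead 0 (homogenization n d α f - C b * X 0 ^ d) =
      weightedHomogeneousComponent α d f := by
  have hvanish : ∀ i ∈ Finset.range d, (0 : MvPolynomial (Fin (n + 1)) ℂ) ^ (d - i) = 0 :=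
    fun i hi ↦ zero_pow (Nat.sub_ne_zero_of_lt (Finset.mem_range.1 hi))
  simp only [homogenization, map_sub, map_sum, map_mul, map_pow, specializeHead_rename_succ,
    specializeHead_X_zero, map_zero, zero_pow hd, mul_zero, sub_zero]
  rw [Finset.sum_range_succ, Nat.sub_self, pow_zero, mul_one, add_eq_right]
  exact Finset.sum_eq_zero fun i hi ↦ by rw [hvanish i hi, mul_zero]

lemma eval_specializeHead_one_homogenization_sub_ne_zero (hd : weightedTotalDegree α f ≤ d)
    (hb : b ∉ (fun x ↦ eval x f) '' {x | ∀ i, eval x (pderiv i f) = 0}) {y : Fin (n + 1) → ℂ}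
    (hy : ∀ i, eval y (pderiv i
      (specializeHead 1 (homogenization n d α f - C b * X 0 ^ d))) = 0) :
    eval y (specializeHead 1 (homogenization n d α f - C b * X 0 ^ d)) ≠ 0 := by
  simp only [specializeHead_one_homogenization_sub b hd, map_sub, pderiv_C, sub_zero, eval_C,
    sub_ne_zero] at hy ⊢
  exact fun hfy ↦ hb ⟨y, hy, hfy⟩

end Homogenization

/-- Let `f` be strongly tame of weighted degree `d` with homogenization `F`,
let the monomials `x^β`, `β ∈ I`, be a ℂ-basis of `V_g` and let `b` be a regular value of
`f`.  Then there is a map `β ↦ d_β ∈ ℕ ∪ {0}` such that the monomials `x₀^{β₀}·x^β` with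
`β ∈ I`, `0 ≤ β₀ ≤ d_β - 1`, form a ℂ-basis of
`Ṽ = ℂ[x₀,x]/⟨∂F_b/∂x₀, …, ∂F_b/∂x_{n+1}⟩` where `F_b = F - b·x₀^d`. -/
theorem exists_dbeta_basis
    (n : ℕ) (hn : 1 ≤ n) (α : Fin (n + 1) → ℕ)
    (hαpos : ∀ i, 0 < α i) (hα : Finset.univ.gcd α = 1)
    (f : MvPolynomial (Fin (n + 1)) ℂ) (d : ℕ)
    (hd : MvPolynomial.weightedTotalDegree α f = d)
    (g : MvPolynomial (Fin (n + 1)) ℂ)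
    (hg : g = weightedHomogeneousComponent α d f)
    (hg0 : g ≠ 0)
    (htame : ∀ x : Fin (n + 1) → ℂ, (∀ i, eval x (pderiv i g) = 0) → x = 0)
    (I : Finset (Fin (n + 1) →₀ ℕ))
    (hIindep : LinearIndependent ℂ (fun β : I =>
      Ideal.Quotient.mk (Ideal.span (Set.range fun i => pderiv i g))
        (monomial (β : Fin (n + 1) →₀ ℕ) (1 : ℂ))))
    (hIspan : Submodule.span ℂ (Set.range fun β : I =>
      Ideal.Quotient.mk (Ideal.span (Set.range fun i => pderiv i g))
        (monomial (β : Fin (n + 1) →₀ ℕ) (1 : ℂ))) = ⊤)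
    (b : ℂ)
    (hb : b ∉ (fun x => eval x f) '' {x : Fin (n + 1) → ℂ | ∀ i, eval x (pderiv i f) = 0}) :
    ∃ dβ : (Fin (n + 1) →₀ ℕ) → ℕ,
      LinearIndependent ℂ
        (fun p : {p : (Fin (n + 1) →₀ ℕ) × ℕ // p.1 ∈ I ∧ p.2 < dβ p.1} =>
          Ideal.Quotient.mk (fullJacobianIdeal n d α f b)
            (X 0 ^ (p : (Fin (n + 1) →₀ ℕ) × ℕ).2 *
              rename Fin.succ (monomial (p : (Fin (n + 1) →₀ ℕ) × ℕ).1 (1 : ℂ)))) ∧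
      Submodule.span ℂ
        (Set.range fun p : {p : (Fin (n + 1) →₀ ℕ) × ℕ // p.1 ∈ I ∧ p.2 < dβ p.1} =>
          Ideal.Quotient.mk (fullJacobianIdeal n d α f b)
            (X 0 ^ (p : (Fin (n + 1) →₀ ℕ) × ℕ).2 *
              rename Fin.succ (monomial (p : (Fin (n + 1) →₀ ℕ) × ℕ).1 (1 : ℂ)))) = ⊤ := by
  have hd0 : d ≠ 0 := ne_zero_of_forall_eval_pderiv_weightedHomogeneousComponent
    (fun i ↦ (hαpos i).ne') (hg ▸ htame)
  have hspan := hIspan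
  rw [hg, ← specializeHead_zero_homogenization_sub b hd0] at hspan
  exact exists_dbeta_basis_general (w := Fin.cons 1 α) (e := fun β ↦ monomial β 1) (s := I)
    one_ne_zero (Nat.cast_ne_zero.2 hd0) (isWeightedHomogeneous_homogenization_sub n d α f b)
    (fun _ ↦ eval_specializeHead_one_homogenization_sub_ne_zero b hd.le hb) hspan
end
end
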